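/- Let A ∈ ℝ^{m×n} with m ≤ n and A ≠ 0, with largest and smallest singular values σ₁ and σ_m, let k be a positive integer with 3k ≤ n, let δ₁ ∈ (0,1) be a restricted isometry constant of order k for A, let δ₂ ∈ (0,1) be a restricted isometry constant of order 2k for A, and let δ₃ ∈ (0,1) be a restricted isometry constant of order 3k for A with δ₂ ≤ δ₃ < 1/2. Let ε > max{σ₁², ((σ₁² − σ_m²)/(1/2 − δ₃) − 1)σ₁²} and let λ satisfy ε + σ₁² − (1/2 − δ₃)(ε + σ₁²)/σ₁² < λ ≤ ε + σ_m². Let x ∈ ℝ^n, e ∈ ℝ^m, y = Ax + e, let x_S be a hard k-thresholding of x, and set e' := A(x − x_S) + e. Suppose (x^p)_{p≥0} is a sequence in ℝ^n with x^0 k-sparse such that for every p ≥ 0 there is a vector x̄^p that is a hard k-thresholding of x^p + λ(AᵀA + εI)^{−1}Aᵀ(y − Ax^p), and x^{p+1} is a minimizer of ‖y − Az‖₂ over all z ∈ ℝ^n with supp(z) ⊆ supp(x̄^p). Then, with ρ := √3(δ₃ + σ₁² − λσ₁²/(ε + σ₁²))/√(1 − δ₂²), one has ρ < 1 and, for every p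 ≥ 0, ‖x^p − x_S‖₂ ≤ ρ^p ‖x^0 − x_S‖₂ + τ ‖e'‖₂, where τ := (1/(1 − ρ)) ( √3 λ σ₁ / (√(1 − δ₂²)(ε + σ₁²)) + √(1 + δ₁)/(1 − δ₂) ). -/

import Mathlib

/-!
With `R = (AᵀA + εI)⁻¹` and `u = x^p - x_S`, the vector `z` that is thresholded satisfies
`z - x_S = (u - AᵀAu) + (AᵀAu - λRAᵀAu) + λRAᵀe'`. On the at most `3k` relevant coordinates these
three terms are bounded respectively by

* `δ₃‖u‖`, by the polarized restricted isometry property (`ric_indicator`);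
* `(σ₁² - λσ₁²/(ε+σ₁²))‖u‖`, by diagonalizing `AᵀA`: the eigenvalues `μ - λμ/(μ+ε)` are nonnegative
  and largest at `μ = σ₁²` since `λ ≤ ε + σ_m²` (`gram_sub_resolvent_le`);
* `λσ₁/(ε+σ₁²)‖e'‖`, again by diagonalization, as `s/(s²+ε)` increases for `s² ≤ ε`
  (`resolvent_transpose_le`).

Hard thresholding picks the `k` largest entries, so the part of `x_S` outside `supp xbar` is at most
`√2` times this error (`threshold_tail`). Since the residual of the least-squares step is
orthogonal to the columns of `A` in `supp xbar`, that step costs a further factor `1/√(1-δ₂²)` and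
adds `√(1+δ₁)/(1-δ₂)‖e'‖` (`projection_error`). This gives a one-step contraction (`nshtp_step`),
even with `√2` in place of `√3`, and the theorem follows by summing a geometric series. The lower
bound on `λ` makes `δ₃ + σ₁² - λσ₁²/(ε+σ₁²) < 1/2`, while `1 - δ₂² > 3/4`, hence `ρ < 1`.
-/

open Matrix Filter Topology

/-- Euclidean (ℓ₂) norm of a vector in ℝ^n. -/
noncomputable def norm2 {n : ℕ} (x : Fin n → ℝ) : ℝ := Real.sqrt (∑ i, x i ^ 2)

/-- Euclidean inner product. -/
def dot {n : ℕ} (u v : Fin n → ℝ) : ℝ := ∑ i, u i * v i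

/-- Support of a vector. -/
def supp {n : ℕ} (x : Fin n → ℝ) : Set (Fin n) := {i | x i ≠ 0}

/-- δ ∈ (0,1) is a restricted isometry constant of order q for A. -/
def IsRIC {m n : ℕ} (A : Matrix (Fin m) (Fin n) ℝ) (q : ℕ) (δ : ℝ) : Prop :=
  0 < δ ∧ δ < 1 ∧
    ∀ x : Fin n → ℝ, (supp x).ncard ≤ q →
      (1 - δ) * norm2 x ^ 2 ≤ norm2 (A.mulVec x) ^ 2 ∧
      norm2 (A.mulVec x) ^ 2 ≤ (1 + δ) * norm2 x ^ 2

/-- σ is the largest singular value (spectral norm) of A: it bounds ‖Av‖₂/‖v‖₂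
and this bound is attained. -/
def IsMaxSingularValue {m n : ℕ} (A : Matrix (Fin m) (Fin n) ℝ) (σ : ℝ) : Prop :=
  0 ≤ σ ∧ (∀ v : Fin n → ℝ, norm2 (A.mulVec v) ≤ σ * norm2 v) ∧
    ∃ v : Fin n → ℝ, v ≠ 0 ∧ norm2 (A.mulVec v) = σ * norm2 v

/-- For m ≤ n, σ is the smallest singular value of A, i.e. σ² is the smallest
eigenvalue of A Aᵀ: σ is the infimum of ‖Aᵀu‖₂/‖u‖₂ and it is attained. -/
def IsMinSingularValue {m n : ℕ} (A : Matrix (Fin m) (Fin n) ℝ) (σ : ℝ) : Prop :=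
  0 ≤ σ ∧ (∀ u : Fin m → ℝ, σ * norm2 u ≤ norm2 (Aᵀ.mulVec u)) ∧
    ∃ u : Fin m → ℝ, u ≠ 0 ∧ norm2 (Aᵀ.mulVec u) = σ * norm2 u

/-- w is a hard k-thresholding of z with associated index set S*. -/
def IsHardThresholding {n : ℕ} (k : ℕ) (z w : Fin n → ℝ) (S : Set (Fin n)) : Prop :=
  S.ncard = k ∧ (∀ i ∈ S, w i = z i) ∧ (∀ i ∉ S, w i = 0) ∧
    ∀ i ∈ S, ∀ j ∉ S, |z j| ≤ |z i|

/-! ### The Euclidean norm -/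

lemma norm2_eq {n : ℕ} (x : Fin n → ℝ) : norm2 x = ‖WithLp.toLp 2 x‖ := by
  simp [norm2, EuclideanSpace.norm_eq]

lemma norm2_nonneg {n : ℕ} (x : Fin n → ℝ) : 0 ≤ norm2 x := Real.sqrt_nonneg _

lemma norm2_sq {n : ℕ} (x : Fin n → ℝ) : norm2 x ^ 2 = x ⬝ᵥ x := by
  rw [norm2, Real.sq_sqrt (Finset.sum_nonneg fun i _ => sq_nonneg _)]
  simp [dotProduct, sq]

lemma dot_le {n : ℕ} (x y : Fin n → ℝ) : x ⬝ᵥ y ≤ norm2 x * norm2 y := by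
  have h := real_inner_le_norm (WithLp.toLp 2 y) (WithLp.toLp 2 x)
  rw [← norm2_eq, ← norm2_eq, EuclideanSpace.inner_eq_star_dotProduct] at h
  simpa [mul_comm] using h

lemma norm2_add {n : ℕ} (x y : Fin n → ℝ) : norm2 (x + y) ≤ norm2 x + norm2 y := by
  simp only [norm2_eq, WithLp.toLp_add]
  exact norm_add_le _ _

lemma norm2_smul {n : ℕ} (c : ℝ) (x : Fin n → ℝ) : norm2 (c • x) = |c| * norm2 x := by
  simp only [norm2_eq, WithLp.toLp_smul, norm_smul, Real.norm_eq_abs]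

lemma norm2_neg {n : ℕ} (x : Fin n → ℝ) : norm2 (-x) = norm2 x := by
  simp [norm2]

lemma norm2_eq_zero {n : ℕ} {x : Fin n → ℝ} : norm2 x = 0 ↔ x = 0 := by
  simp [norm2_eq]

lemma norm2_mono {n : ℕ} {x y : Fin n → ℝ} (h : ∀ i, x i ^ 2 ≤ y i ^ 2) :
    norm2 x ≤ norm2 y :=
  Real.sqrt_le_sqrt (Finset.sum_le_sum fun i _ => h i)

lemma le_of_sq_le_mul {a c : ℝ} (hc : 0 ≤ c) (h : a ^ 2 ≤ c * a) : a ≤ c := by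
  by_contra! hlt
  nlinarith

/-! ### Spectral bounds for `AᵀA` and its resolvent -/

/-- An orthonormal eigenbasis of `AᵀA`, with orthonormality recorded as unit length together with
Parseval's identity. -/
lemma spectral_gram {m n : ℕ} (A : Matrix (Fin m) (Fin n) ℝ) :
    ∃ (v : Fin n → Fin n → ℝ) (μ : Fin n → ℝ),
      (∀ i, Aᵀ *ᵥ (A *ᵥ v i) = μ i • v i) ∧ (∀ i, v i ⬝ᵥ v i = 1) ∧
      ∀ x : Fin n → ℝ, norm2 x ^ 2 = ∑ i, (v i ⬝ᵥ x) ^ 2 := by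
  have hH : (Aᵀ * A).IsHermitian := by
    simpa [Matrix.conjTranspose_eq_transpose_of_trivial] using
      Matrix.isHermitian_conjTranspose_mul_self A
  refine ⟨fun i => (hH.eigenvectorBasis i).ofLp, hH.eigenvalues, fun i => ?_, fun i => ?_,
    fun x => ?_⟩
  · rw [Matrix.mulVec_mulVec]
    exact hH.mulVec_eigenvectorBasis i
  · rw [← norm2_sq, norm2_eq]
    simp
  · rw [norm2_eq, ← hH.eigenvectorBasis.sum_sq_norm_inner_right]
    refine Finset.sum_congr rfl fun i _ => ?_
    rw [EuclideanSpace.inner_eq_star_dotProduct, Real.norm_eq_abs, sq_abs]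
    simp [dotProduct_comm]

/-- `⟨u, Aᵀ w⟩ = ⟨A u, w⟩`. -/
lemma dot_transpose {m n : ℕ} (A : Matrix (Fin m) (Fin n) ℝ) (u : Fin n → ℝ) (w : Fin m → ℝ) :
    u ⬝ᵥ Aᵀ *ᵥ w = A *ᵥ u ⬝ᵥ w := by
  rw [Matrix.dotProduct_mulVec, Matrix.vecMul_transpose]

/-- For `ε > 0` the matrix `AᵀA + εI` is positive definite, so its `⁻¹` is a genuine inverse. -/
lemma resolvent_spec {m n : ℕ} (A : Matrix (Fin m) (Fin n) ℝ) {ε : ℝ} (hε : 0 < ε)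
    (b : Fin n → ℝ) :
    Aᵀ *ᵥ (A *ᵥ ((Aᵀ * A + ε • (1 : Matrix (Fin n) (Fin n) ℝ))⁻¹ *ᵥ b)) +
      ε • ((Aᵀ * A + ε • (1 : Matrix (Fin n) (Fin n) ℝ))⁻¹ *ᵥ b) = b := by
  set H := Aᵀ * A + ε • (1 : Matrix (Fin n) (Fin n) ℝ) with hH
  have hpos : H.PosDef := by
    have h1 : (Aᵀ * A).PosSemidef := by
      simpa [Matrix.conjTranspose_eq_transpose_of_trivial] using
        Matrix.posSemidef_conjTranspose_mul_self A
    exact Matrix.PosDef.posSemidef_add h1 (Matrix.PosDef.one.smul hε)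
  have hu : IsUnit H.det := (Matrix.isUnit_iff_isUnit_det _).1 hpos.isUnit
  have h := congrArg (· *ᵥ b) (Matrix.mul_nonsing_inv H hu)
  simp only [← Matrix.mulVec_mulVec, Matrix.one_mulVec] at h
  conv_rhs => rw [← h]
  rw [hH, Matrix.add_mulVec, Matrix.smul_mulVec, Matrix.one_mulVec, ← Matrix.mulVec_mulVec]

/-- If `μ ≠ 0` then `w = Av` is a nonzero vector with `‖w‖² = μ` and `‖Aᵀw‖² = μ²`, which forces
`μ ≥ σ_m²`. -/
lemma gram_eigenvalue_bounds {m n : ℕ} {A : Matrix (Fin m) (Fin n) ℝ} {σ1 σm : ℝ}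
    (hσ1 : IsMaxSingularValue A σ1) (hσm : IsMinSingularValue A σm)
    {v : Fin n → ℝ} {μ : ℝ} (hv : Aᵀ *ᵥ (A *ᵥ v) = μ • v) (hv1 : v ⬝ᵥ v = 1) :
    0 ≤ μ ∧ μ ≤ σ1 ^ 2 ∧ (μ = 0 ∨ σm ^ 2 ≤ μ) := by
  have hμ : norm2 (A *ᵥ v) ^ 2 = μ := by
    rw [norm2_sq, ← dot_transpose, hv, dotProduct_smul, hv1]; simp
  have hn : norm2 v ^ 2 = 1 := by rw [norm2_sq, hv1]
  have h0 : 0 ≤ μ := hμ ▸ sq_nonneg _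
  refine ⟨h0, ?_, ?_⟩
  · have := pow_le_pow_left₀ (norm2_nonneg _) (hσ1.2.1 v) 2
    rw [hμ, mul_pow, hn] at this
    linarith
  · have := pow_le_pow_left₀ (mul_nonneg hσm.1 (norm2_nonneg _)) (hσm.2.1 (A *ᵥ v)) 2
    rw [hv, norm2_smul, mul_pow, mul_pow, hμ, hn, sq_abs] at this
    rcases h0.eq_or_lt with h | h
    · exact Or.inl h.symm
    · exact Or.inr (le_of_mul_le_mul_right (by nlinarith) h)

lemma minSV_le_maxSV {m n : ℕ} {A : Matrix (Fin m) (Fin n) ℝ} {σ1 σm : ℝ}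
    (hσ1 : IsMaxSingularValue A σ1) (hσm : IsMinSingularValue A σm) : σm ≤ σ1 := by
  obtain ⟨-, hmin, w, hw, -⟩ := hσm
  have hwpos : 0 < norm2 w := (norm2_nonneg w).lt_of_ne fun h => hw (norm2_eq_zero.1 h.symm)
  have h2 : norm2 (Aᵀ *ᵥ w) ≤ σ1 * norm2 w := by
    refine le_of_sq_le_mul (mul_nonneg hσ1.1 hwpos.le) ?_
    rw [norm2_sq, dot_transpose]
    have h3 := dot_le (A *ᵥ (Aᵀ *ᵥ w)) w
    have h4 := hσ1.2.1 (Aᵀ *ᵥ w)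
    nlinarith
  exact le_of_mul_le_mul_right ((hmin w).trans h2) hwpos

/-- The map `AᵀA - λ(AᵀA + εI)⁻¹AᵀA` has eigenvalues `μ - λμ/(μ+ε)`, which lie between `0` and the
value at `μ = σ₁²`, because `λ ≤ ε + σ_m²` and every nonzero `μ` is at least `σ_m²`. -/
lemma gram_sub_resolvent_le {m n : ℕ} {A : Matrix (Fin m) (Fin n) ℝ} {σ1 σm : ℝ}
    (hσ1 : IsMaxSingularValue A σ1) (hσm : IsMinSingularValue A σm) {ε lam : ℝ}
    (hε : 0 < ε) (hlam : lam ≤ ε + σm ^ 2) (u : Fin n → ℝ) :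
    norm2 (Aᵀ *ᵥ (A *ᵥ u) -
      lam • ((Aᵀ * A + ε • (1 : Matrix (Fin n) (Fin n) ℝ))⁻¹ *ᵥ (Aᵀ *ᵥ (A *ᵥ u)))) ≤
      (σ1 ^ 2 - lam * σ1 ^ 2 / (ε + σ1 ^ 2)) * norm2 u := by
  obtain ⟨v, μ, hv, hv1, hpars⟩ := spectral_gram A
  have hspec := resolvent_spec A hε (Aᵀ *ᵥ (A *ᵥ u))
  set h := (Aᵀ * A + ε • (1 : Matrix (Fin n) (Fin n) ℝ))⁻¹ *ᵥ (Aᵀ *ᵥ (A *ᵥ u))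
  have hG : ∀ i (w : Fin n → ℝ), v i ⬝ᵥ Aᵀ *ᵥ (A *ᵥ w) = μ i * (v i ⬝ᵥ w) := fun i w => by
    rw [dot_transpose, dotProduct_comm, ← dot_transpose, hv, dotProduct_smul, smul_eq_mul,
      dotProduct_comm]
  have hσle := minSV_le_maxSV hσ1 hσm
  have hsq : σm ^ 2 ≤ σ1 ^ 2 := pow_le_pow_left₀ hσm.1 hσle 2
  have hden : 0 < ε + σ1 ^ 2 := by positivity
  have hc : 0 ≤ σ1 ^ 2 - lam * σ1 ^ 2 / (ε + σ1 ^ 2) := by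
    rw [sub_nonneg, div_le_iff₀ hden]
    nlinarith [sq_nonneg σ1]
  refine le_of_sq_le_sq ?_ (mul_nonneg hc (norm2_nonneg u))
  rw [mul_pow, hpars, hpars, Finset.mul_sum]
  refine Finset.sum_le_sum fun i _ => ?_
  obtain ⟨hμ0, hμ1, hμm⟩ := gram_eigenvalue_bounds hσ1 hσm (hv i) (hv1 i)
  have hdi : 0 < ε + μ i := by positivity
  have hh : v i ⬝ᵥ h = μ i * (v i ⬝ᵥ u) / (ε + μ i) := by
    have := congrArg (v i ⬝ᵥ ·) hspec
    simp only [dotProduct_add, hG, dotProduct_smul, smul_eq_mul] at this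
    rw [eq_div_iff hdi.ne']
    linarith
  have e1 : v i ⬝ᵥ (Aᵀ *ᵥ (A *ᵥ u) - lam • h) =
      (μ i - lam * μ i / (ε + μ i)) * (v i ⬝ᵥ u) := by
    rw [dotProduct_sub, hG, dotProduct_smul, hh, smul_eq_mul]; ring
  rw [e1, mul_pow]
  refine mul_le_mul_of_nonneg_right (pow_le_pow_left₀ ?_ ?_ 2) (sq_nonneg _)
  · rw [sub_nonneg, div_le_iff₀ hdi]
    rcases hμm with h | h
    · simp [h]
    · nlinarith
  · rcases hμm with h | h
    · rw [h]; simpa using hc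
    · have : (σ1 ^ 2 - lam * σ1 ^ 2 / (ε + σ1 ^ 2)) - (μ i - lam * μ i / (ε + μ i)) =
          (σ1 ^ 2 - μ i) * ((ε + σ1 ^ 2) * (ε + μ i) - lam * ε) /
            ((ε + σ1 ^ 2) * (ε + μ i)) := by
        field_simp
        ring
      rw [← sub_nonneg, this]
      refine div_nonneg (mul_nonneg (by linarith) ?_) (by positivity)
      nlinarith [mul_nonneg hε.le (sq_nonneg σ1), mul_nonneg hμ0 (sq_nonneg σ1)]

/-- `‖(AᵀA + εI)⁻¹Aᵀ‖ ≤ σ₁/(ε + σ₁²)`. By duality it suffices to bound `A(AᵀA + εI)⁻¹`, whose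
squared singular values are `μ/(μ+ε)²`; these increase with `μ` on `[0, ε]`. -/
lemma resolvent_transpose_le {m n : ℕ} {A : Matrix (Fin m) (Fin n) ℝ} {σ1 σm : ℝ}
    (hσ1 : IsMaxSingularValue A σ1) (hσm : IsMinSingularValue A σm) {ε : ℝ}
    (hε : 0 < ε) (hεσ : σ1 ^ 2 < ε) (e : Fin m → ℝ) :
    norm2 ((Aᵀ * A + ε • (1 : Matrix (Fin n) (Fin n) ℝ))⁻¹ *ᵥ (Aᵀ *ᵥ e)) ≤
      σ1 / (ε + σ1 ^ 2) * norm2 e := by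
  obtain ⟨v, μ, hv, hv1, hpars⟩ := spectral_gram A
  have hg := resolvent_spec A hε (Aᵀ *ᵥ e)
  set g := (Aᵀ * A + ε • (1 : Matrix (Fin n) (Fin n) ℝ))⁻¹ *ᵥ (Aᵀ *ᵥ e)
  have hh := resolvent_spec A hε g
  set h := (Aᵀ * A + ε • (1 : Matrix (Fin n) (Fin n) ℝ))⁻¹ *ᵥ g
  have hG : ∀ i (w : Fin n → ℝ), v i ⬝ᵥ Aᵀ *ᵥ (A *ᵥ w) = μ i * (v i ⬝ᵥ w) := fun i w => by
    rw [dot_transpose, dotProduct_comm, ← dot_transpose, hv, dotProduct_smul, smul_eq_mul,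
      dotProduct_comm]
  have hden : 0 < ε + σ1 ^ 2 := by positivity
  have hc : 0 ≤ σ1 / (ε + σ1 ^ 2) := div_nonneg hσ1.1 hden.le
  have hsymm : norm2 g ^ 2 = A *ᵥ h ⬝ᵥ e := by
    have hgg : g ⬝ᵥ g = (Aᵀ *ᵥ (A *ᵥ h) + ε • h) ⬝ᵥ g := by rw [hh]
    rw [norm2_sq, ← dot_transpose A h e, ← hg, hgg]
    simp only [add_dotProduct, dotProduct_add, dotProduct_smul, smul_dotProduct, dot_transpose]
    rw [dotProduct_comm, dot_transpose, dotProduct_comm]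
  have hAh : norm2 (A *ᵥ h) ≤ σ1 / (ε + σ1 ^ 2) * norm2 g := by
    refine le_of_sq_le_sq ?_ (mul_nonneg hc (norm2_nonneg g))
    -- polarization turns Parseval's identity into `⟨h, AᵀA h⟩ = ∑ μᵢ ⟨vᵢ, h⟩²`
    have hquad : norm2 (A *ᵥ h) ^ 2 = ∑ i, μ i * (v i ⬝ᵥ h) ^ 2 := by
      have p1 := hpars (h + Aᵀ *ᵥ (A *ᵥ h))
      have p2 := hpars (h - Aᵀ *ᵥ (A *ᵥ h))
      have p3 : norm2 (h + Aᵀ *ᵥ (A *ᵥ h)) ^ 2 - norm2 (h - Aᵀ *ᵥ (A *ᵥ h)) ^ 2 =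
          4 * norm2 (A *ᵥ h) ^ 2 := by
        simp only [norm2_sq]
        rw [← dot_transpose A h (A *ᵥ h)]
        simp only [dotProduct_add, add_dotProduct, dotProduct_sub, sub_dotProduct]
        rw [dotProduct_comm (Aᵀ *ᵥ (A *ᵥ h)) h]
        ring
      rw [p1, p2, ← Finset.sum_sub_distrib] at p3
      have p4 : ∑ i, ((v i ⬝ᵥ (h + Aᵀ *ᵥ (A *ᵥ h))) ^ 2 - (v i ⬝ᵥ (h - Aᵀ *ᵥ (A *ᵥ h))) ^ 2) =
          4 * ∑ i, μ i * (v i ⬝ᵥ h) ^ 2 := by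
        rw [Finset.mul_sum]
        refine Finset.sum_congr rfl fun i _ => ?_
        rw [dotProduct_add, dotProduct_sub, hG]
        ring
      linarith
    rw [hquad, mul_pow, hpars, Finset.mul_sum]
    refine Finset.sum_le_sum fun i _ => ?_
    obtain ⟨hμ0, hμ1, -⟩ := gram_eigenvalue_bounds hσ1 hσm (hv i) (hv1 i)
    have e1 : v i ⬝ᵥ g = (ε + μ i) * (v i ⬝ᵥ h) := by
      rw [← hh]
      simp only [dotProduct_add, hG, dotProduct_smul, smul_eq_mul]
      ring
    rw [e1, mul_pow, ← mul_assoc]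
    refine mul_le_mul_of_nonneg_right ?_ (sq_nonneg _)
    rw [div_pow, div_mul_eq_mul_div, le_div_iff₀ (by positivity)]
    have : 0 ≤ (σ1 ^ 2 - μ i) * (ε ^ 2 - μ i * σ1 ^ 2) :=
      mul_nonneg (by linarith) (by nlinarith [sq_nonneg σ1])
    nlinarith
  refine le_of_sq_le_mul (mul_nonneg hc (norm2_nonneg e)) ?_
  rw [hsymm]
  have := dot_le (A *ᵥ h) e
  nlinarith [norm2_nonneg e]

/-! ### Restricted isometry -/

/-- Polarized form of the restricted isometry property. -/
lemma ric_dot {m n : ℕ} {A : Matrix (Fin m) (Fin n) ℝ} {q : ℕ} {δ : ℝ} (h : IsRIC A q δ)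
    {W : Set (Fin n)} (hW : W.ncard ≤ q) {u v : Fin n → ℝ} (hu : supp u ⊆ W) (hv : supp v ⊆ W) :
    u ⬝ᵥ v - A *ᵥ u ⬝ᵥ A *ᵥ v ≤ δ * norm2 u * norm2 v := by
  have hsupp : ∀ a b : ℝ, (supp (a • u + b • v)).ncard ≤ q := fun a b => by
    refine (Set.ncard_le_ncard ?_ (Set.toFinite W)).trans hW
    intro i hi
    by_contra hiW
    have h1 : u i = 0 := by by_contra hne; exact hiW (hu hne)
    have h2 : v i = 0 := by by_contra hne; exact hiW (hv hne)
    exact hi (by simp [h1, h2])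
  -- compare the two equal-length vectors `‖v‖ u ± ‖u‖ v`
  have key : norm2 u * norm2 v * (u ⬝ᵥ v - A *ᵥ u ⬝ᵥ A *ᵥ v) ≤
      norm2 u * norm2 v * (δ * norm2 u * norm2 v) := by
    have h1 := (h.2.2 _ (hsupp (norm2 v) (norm2 u))).1
    have h2 := (h.2.2 _ (hsupp (norm2 v) (-norm2 u))).2
    simp only [norm2_sq, Matrix.mulVec_add, Matrix.mulVec_smul, dotProduct_add, add_dotProduct,
      dotProduct_smul, smul_dotProduct, smul_eq_mul] at h1 h2
    rw [dotProduct_comm v u, dotProduct_comm (A *ᵥ v) (A *ᵥ u), ← norm2_sq u, ← norm2_sq v] at h1 h2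
    nlinarith
  rcases (norm2_nonneg u).eq_or_lt with h0 | h0
  · simp [norm2_eq_zero.1 h0.symm, norm2_eq_zero.2]
  rcases (norm2_nonneg v).eq_or_lt with h0' | h0'
  · simp [norm2_eq_zero.1 h0'.symm, norm2_eq_zero.2]
  exact le_of_mul_le_mul_left key (mul_pos h0 h0')

lemma dot_indicator {n : ℕ} (T : Set (Fin n)) (a : Fin n → ℝ) :
    norm2 (T.indicator a) ^ 2 = a ⬝ᵥ T.indicator a := by
  classical
  rw [norm2_sq]
  refine Finset.sum_congr rfl fun i _ => ?_
  by_cases h : i ∈ T <;> simp [h]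

lemma supp_indicator {n : ℕ} (T : Set (Fin n)) (a : Fin n → ℝ) : supp (T.indicator a) ⊆ T := by
  intro i hi
  by_contra h
  exact hi (by simp [h])

/-- Restricted to few coordinates, `I - AᵀA` has norm at most the restricted isometry constant. -/
lemma ric_indicator {m n : ℕ} {A : Matrix (Fin m) (Fin n) ℝ} {q : ℕ} {δ : ℝ} (h : IsRIC A q δ)
    {W T : Set (Fin n)} (hW : W.ncard ≤ q) {u : Fin n → ℝ} (hu : supp u ⊆ W) (hT : T ⊆ W) :
    norm2 (T.indicator (u - Aᵀ *ᵥ (A *ᵥ u))) ≤ δ * norm2 u := by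
  refine le_of_sq_le_mul (mul_nonneg h.1.le (norm2_nonneg u)) ?_
  rw [dot_indicator, sub_dotProduct, dotProduct_comm (Aᵀ *ᵥ (A *ᵥ u)), dot_transpose,
    dotProduct_comm (A *ᵥ _)]
  exact ric_dot h hW hu ((supp_indicator _ _).trans hT)

/-! ### Hard thresholding -/

/-- The energy of `z` lost by thresholding on `S \ S'` is at most the energy kept on `S' \ S`. -/
lemma threshold_exchange {n k : ℕ} {z w : Fin n → ℝ} {S S' : Set (Fin n)} (hS : S.ncard = k)
    (hth : IsHardThresholding k z w S') :
    norm2 ((S \ S').indicator z) ≤ norm2 ((S' \ S).indicator z) := by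
  classical
  obtain ⟨hS', -, -, hmax⟩ := hth
  have hfin : ∀ V : Set (Fin n), ∃ P : Finset (Fin n), (∀ i, i ∈ P ↔ i ∈ V) ∧ V.ncard = P.card ∧
      ∑ i, V.indicator z i ^ 2 = ∑ i ∈ P, z i ^ 2 := by
    intro V
    refine ⟨Finset.univ.filter (· ∈ V), by simp, ?_, ?_⟩
    · rw [← Set.ncard_coe_finset]
      congr 1
      ext
      simp
    · rw [Finset.sum_filter]
      refine Finset.sum_congr rfl fun i _ => ?_
      by_cases h : i ∈ V <;> simp [h]
  obtain ⟨P, hP, hPc, hPs⟩ := hfin (S \ S')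
  obtain ⟨Q, hQ, hQc, hQs⟩ := hfin (S' \ S)
  have hcard : P.card = Q.card := by
    have h1 := Set.ncard_sdiff_add_ncard S S'
    have h2 := Set.ncard_sdiff_add_ncard S' S
    rw [Set.union_comm] at h2
    omega
  refine Real.sqrt_le_sqrt ?_
  rw [hPs, hQs]
  rcases Q.eq_empty_or_nonempty with h | h
  · rw [h, Finset.card_empty, Finset.card_eq_zero] at hcard
    rw [h, hcard]
  -- the least entry kept on `S' \ S` separates the two sums
  · obtain ⟨i0, hi0, hmin⟩ := Finset.exists_min_image _ (fun i => z i ^ 2) h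
    refine (Finset.sum_le_card_nsmul _ _ (z i0 ^ 2) fun j hj => ?_).trans ?_
    · exact sq_le_sq.2 (hmax i0 ((hQ _).1 hi0).1 j ((hP _).1 hj).2)
    · rw [hcard]
      exact Finset.card_nsmul_le_sum _ _ _ hmin

/-- Off the support of the thresholded vector `w`, the `k`-sparse target `a` is controlled by the
error `z - a` on `S ∪ S'`. -/
lemma threshold_tail {n k : ℕ} {z w a : Fin n → ℝ} {S S' : Set (Fin n)} (hS : S.ncard = k)
    (ha : supp a ⊆ S) (hth : IsHardThresholding k z w S') :
    norm2 ((supp w)ᶜ.indicator a) ≤ Real.sqrt 2 * norm2 ((S ∪ S').indicator (z - a)) := by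
  classical
  have hex := threshold_exchange hS hth
  obtain ⟨-, hin, hout, -⟩ := hth
  have ha0 : ∀ i, i ∉ S → a i = 0 := fun i hi => by by_contra h; exact hi (ha h)
  have hw : ∀ i, i ∈ supp w → i ∈ S' := fun i hi => by
    by_contra h; exact hi (hout i h)
  have hz : ∀ i, i ∉ supp w → i ∈ S' → z i = 0 := fun i hi h => by
    rw [← hin i h]; by_contra hne; exact hi hne
  have e1 : (supp w)ᶜ.indicator a =
      (S \ S').indicator z + -(S \ supp w).indicator (z - a) := by
    ext i
    by_cases h1 : i ∈ S <;> by_cases h2 : i ∈ supp w <;> by_cases h3 : i ∈ S' <;>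
      simp [h1, h2, h3, ha0]
    · exact absurd (hw i h2) h3
    · linarith [hz i h2 h3]
  have e2 : (S' \ S).indicator z = (S' \ S).indicator (z - a) := by
    ext i
    by_cases h1 : i ∈ S <;> by_cases h3 : i ∈ S' <;> simp [h1, h3, ha0]
  have e3 : norm2 ((S' \ S).indicator (z - a)) ^ 2 + norm2 ((S \ supp w).indicator (z - a)) ^ 2 ≤
      norm2 ((S ∪ S').indicator (z - a)) ^ 2 := by
    simp only [norm2_sq, dotProduct, ← Finset.sum_add_distrib]
    refine Finset.sum_le_sum fun i _ => ?_
    by_cases h1 : i ∈ S <;> by_cases h2 : i ∈ supp w <;> by_cases h3 : i ∈ S' <;>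
      simp [h1, h2, h3, mul_self_nonneg]
  rw [e2] at hex
  have h1 := norm2_add ((S \ S').indicator z) (-(S \ supp w).indicator (z - a))
  rw [← e1, norm2_neg] at h1
  refine (h1.trans (add_le_add_left hex _)).trans ?_
  refine le_of_sq_le_sq ?_ (mul_nonneg (Real.sqrt_nonneg _) (norm2_nonneg _))
  rw [mul_pow, Real.sq_sqrt (by norm_num)]
  nlinarith [sq_nonneg (norm2 ((S' \ S).indicator (z - a)) -
    norm2 ((S \ supp w).indicator (z - a)))]

/-! ### Least squares on a support -/

/-- Normal equations: the residual of a least-squares solution is orthogonal to the range of `A`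
on the admissible support. -/
lemma least_squares_orth {m n : ℕ} {A : Matrix (Fin m) (Fin n) ℝ} {y : Fin m → ℝ}
    {U : Set (Fin n)} {x : Fin n → ℝ} (hx : supp x ⊆ U)
    (hmin : ∀ z : Fin n → ℝ, supp z ⊆ U → norm2 (y - A *ᵥ x) ≤ norm2 (y - A *ᵥ z))
    {w : Fin n → ℝ} (hw : supp w ⊆ U) : (y - A *ᵥ x) ⬝ᵥ A *ᵥ w = 0 := by
  set r := y - A *ᵥ x with hr
  -- the increase of the squared residual along `x + t w` is quadratic in `t`, without constant term
  have hq : ∀ t : ℝ, 0 ≤ (A *ᵥ w ⬝ᵥ A *ᵥ w) * (t * t) + (-2 * (r ⬝ᵥ A *ᵥ w)) * t + 0 := by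
    intro t
    have hs : supp (x + t • w) ⊆ U := by
      intro i hi
      by_contra hiU
      have h1 : x i = 0 := by by_contra hne; exact hiU (hx hne)
      have h2 : w i = 0 := by by_contra hne; exact hiU (hw hne)
      exact hi (by simp [h1, h2])
    have h := pow_le_pow_left₀ (norm2_nonneg _) (hmin _ hs) 2
    have e : y - A *ᵥ (x + t • w) = r - t • A *ᵥ w := by
      rw [Matrix.mulVec_add, Matrix.mulVec_smul, hr]; abel
    rw [e, norm2_sq, norm2_sq] at h
    simp only [dotProduct_sub, sub_dotProduct, dotProduct_smul, smul_dotProduct, smul_eq_mul] at h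
    rw [dotProduct_comm (A *ᵥ w) r] at h
    nlinarith
  have hd := discrim_le_zero hq
  rw [discrim] at hd
  have : (r ⬝ᵥ A *ᵥ w) ^ 2 ≤ 0 := by nlinarith
  exact pow_eq_zero_iff (two_ne_zero) |>.1 (le_antisymm this (sq_nonneg _))

/-- Error of the projection step: solving least squares on `U` costs a factor `1/√(1-δ₂²)` on the
part of the target missed by `U`, plus a noise term. -/
lemma projection_error {m n k : ℕ} {A : Matrix (Fin m) (Fin n) ℝ} {δ1 δ2 : ℝ}
    (hδ1 : IsRIC A k δ1) (hδ2 : IsRIC A (2 * k) δ2) {a x' : Fin n → ℝ} {e' y : Fin m → ℝ}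
    (hy : y = A *ᵥ a + e') {S U : Set (Fin n)} (hS : S.ncard ≤ k) (hU : U.ncard ≤ k)
    (ha : supp a ⊆ S) (hx : supp x' ⊆ U)
    (hmin : ∀ z : Fin n → ℝ, supp z ⊆ U → norm2 (y - A *ᵥ x') ≤ norm2 (y - A *ᵥ z)) :
    norm2 (x' - a) ≤ norm2 (Uᶜ.indicator a) / Real.sqrt (1 - δ2 ^ 2) +
      Real.sqrt (1 + δ1) / (1 - δ2) * norm2 e' := by
  classical
  obtain ⟨hδ2p, hδ2l, -⟩ := id hδ2
  set d := x' - a with hd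
  set dU := U.indicator d with hdU
  have hdUs : supp dU ⊆ U := supp_indicator _ _
  have horth := least_squares_orth hx hmin hdUs
  have hres : y - A *ᵥ x' = e' - A *ᵥ d := by
    rw [hy, hd, Matrix.mulVec_sub]; abel
  rw [hres, sub_dotProduct] at horth
  have hds : supp d ⊆ U ∪ S := by
    intro i hi
    by_contra h
    rw [Set.mem_union, not_or] at h
    have h1 : x' i = 0 := by by_contra hne; exact h.1 (hx hne)
    have h2 : a i = 0 := by by_contra hne; exact h.2 (ha hne)
    exact hi (by simp [hd, h1, h2])
  have hcard : (U ∪ S).ncard ≤ 2 * k := (Set.ncard_union_le _ _).trans (by omega)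
  have h1 := ric_dot hδ2 hcard hds (hdUs.trans Set.subset_union_left)
  have h2 := dot_le e' (A *ᵥ dU)
  have h3 : norm2 (A *ᵥ dU) ≤ Real.sqrt (1 + δ1) * norm2 dU := by
    refine le_of_sq_le_sq ?_ (mul_nonneg (Real.sqrt_nonneg _) (norm2_nonneg _))
    rw [mul_pow, Real.sq_sqrt (by linarith [hδ1.1])]
    exact (hδ1.2.2 dU ((Set.ncard_le_ncard hdUs (Set.toFinite U)).trans hU)).2
  set c := Real.sqrt (1 + δ1) * norm2 e' with hc
  have hc0 : 0 ≤ c := mul_nonneg (Real.sqrt_nonneg _) (norm2_nonneg _)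
  have h4 : norm2 dU ≤ δ2 * norm2 d + c := by
    refine le_of_sq_le_mul (add_nonneg (mul_nonneg hδ2p.le (norm2_nonneg _)) hc0) ?_
    rw [dot_indicator]
    have := mul_le_mul_of_nonneg_left h3 (norm2_nonneg e')
    rw [← hdU]
    nlinarith
  have h5 : norm2 d ^ 2 = norm2 dU ^ 2 + norm2 (Uᶜ.indicator a) ^ 2 := by
    simp only [norm2_sq, dotProduct, ← Finset.sum_add_distrib]
    refine Finset.sum_congr rfl fun i _ => ?_
    by_cases h : i ∈ U
    · simp [hdU, h]
    · have h1 : x' i = 0 := by by_contra hne; exact h (hx hne)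
      simp [hdU, h, hd, h1]
  set b := norm2 (Uᶜ.indicator a)
  set D := norm2 d
  have hb0 : 0 ≤ b := norm2_nonneg _
  have hD0 : 0 ≤ D := norm2_nonneg _
  have hpos : 0 < 1 - δ2 ^ 2 := by nlinarith
  set s := Real.sqrt (1 - δ2 ^ 2) with hs
  have hs0 : 0 < s := Real.sqrt_pos.2 hpos
  have hs2 : s ^ 2 = 1 - δ2 ^ 2 := Real.sq_sqrt hpos.le
  have h6 : D ^ 2 ≤ (δ2 * D + c) ^ 2 + b ^ 2 := by
    have := pow_le_pow_left₀ (norm2_nonneg dU) h4 2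
    linarith
  -- completing the square in the quadratic inequality for `D`
  have h7 : s ^ 2 * D - δ2 * c ≤ s * b + c := by
    refine le_of_sq_le_sq ?_ (by positivity)
    have h8 : s ^ 2 * (D ^ 2 * s ^ 2 - 2 * δ2 * D * c) ≤ s ^ 2 * (c ^ 2 + b ^ 2) :=
      mul_le_mul_of_nonneg_left (by rw [hs2]; nlinarith) (sq_nonneg s)
    have h9 : 0 ≤ s * b * c := by positivity
    have h10 : s ^ 2 * c ^ 2 = c ^ 2 - δ2 ^ 2 * c ^ 2 := by rw [hs2]; ring
    nlinarith
  have e : b / s + Real.sqrt (1 + δ1) / (1 - δ2) * norm2 e' = (s * b + (1 + δ2) * c) / s ^ 2 := by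
    have h11 : 1 - δ2 ≠ 0 := by linarith
    have h12 : s ^ 2 = (1 - δ2) * (1 + δ2) := by rw [hs2]; ring
    have h13 : 1 + δ2 ≠ 0 := by linarith
    rw [add_div]
    congr 1
    · field_simp
    · rw [h12, hc]; field_simp
  rw [e, le_div_iff₀ (by positivity)]
  linarith

/-! ### The iteration -/

/-- One iteration of the algorithm contracts the error up to noise. -/
lemma nshtp_step {m n k : ℕ} {A : Matrix (Fin m) (Fin n) ℝ} {σ1 σm δ1 δ2 δ3 ε lam : ℝ}
    (hσ1 : IsMaxSingularValue A σ1) (hσm : IsMinSingularValue A σm)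
    (hδ1 : IsRIC A k δ1) (hδ2 : IsRIC A (2 * k) δ2) (hδ3 : IsRIC A (3 * k) δ3)
    (hε : 0 < ε) (hεσ : σ1 ^ 2 < ε) (hlam0 : 0 ≤ lam) (hlam : lam ≤ ε + σm ^ 2)
    {a xp x' w : Fin n → ℝ} {e' y : Fin m → ℝ} (hy : y = A *ᵥ a + e')
    {S S' : Set (Fin n)} (hS : S.ncard = k) (ha : supp a ⊆ S) (hxp : (supp xp).ncard ≤ k)
    (hth : IsHardThresholding k
      (xp + lam • (Aᵀ * A + ε • (1 : Matrix (Fin n) (Fin n) ℝ))⁻¹ *ᵥ (Aᵀ *ᵥ (y - A *ᵥ xp))) w S')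
    (hx : supp x' ⊆ supp w)
    (hmin : ∀ z : Fin n → ℝ, supp z ⊆ supp w → norm2 (y - A *ᵥ x') ≤ norm2 (y - A *ᵥ z)) :
    norm2 (x' - a) ≤
      Real.sqrt 2 * (δ3 + σ1 ^ 2 - lam * σ1 ^ 2 / (ε + σ1 ^ 2)) / Real.sqrt (1 - δ2 ^ 2) *
        norm2 (xp - a) +
      (Real.sqrt 2 * lam * σ1 / (Real.sqrt (1 - δ2 ^ 2) * (ε + σ1 ^ 2)) +
        Real.sqrt (1 + δ1) / (1 - δ2)) * norm2 e' := by
  classical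
  set u := xp - a with hu
  set R := (Aᵀ * A + ε • (1 : Matrix (Fin n) (Fin n) ℝ))⁻¹ with hR
  set z := xp + lam • R *ᵥ (Aᵀ *ᵥ (y - A *ᵥ xp)) with hz
  have hwS : supp w ⊆ S' := fun i hi => by
    by_contra h; exact hi (hth.2.2.1 i h)
  have hw : (supp w).ncard ≤ k := (Set.ncard_le_ncard hwS (Set.toFinite _)).trans hth.1.le
  have hproj := projection_error hδ1 hδ2 hy hS.le hw ha hx hmin
  have htail := threshold_tail hS ha hth
  set T := S ∪ S'
  have hsplit : z - a = (u - Aᵀ *ᵥ (A *ᵥ u)) +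
      ((Aᵀ *ᵥ (A *ᵥ u) - lam • R *ᵥ (Aᵀ *ᵥ (A *ᵥ u))) + lam • R *ᵥ (Aᵀ *ᵥ e')) := by
    have : y - A *ᵥ xp = e' - A *ᵥ u := by
      rw [hy, hu, Matrix.mulVec_sub]; abel
    rw [hz, this, Matrix.mulVec_sub, Matrix.mulVec_sub, smul_sub, hu]
    abel
  have hW : (supp xp ∪ T).ncard ≤ 3 * k := by
    have h1 := Set.ncard_union_le (supp xp) T
    have h2 : T.ncard ≤ S.ncard + S'.ncard := Set.ncard_union_le S S'
    have h3 := hth.1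
    omega
  have hus : supp u ⊆ supp xp ∪ T := by
    intro i hi
    by_contra h
    simp only [Set.mem_union, not_or, T] at h
    have h1 : xp i = 0 := by by_contra hne; exact h.1 hne
    have h2 : a i = 0 := by by_contra hne; exact h.2.1 (ha hne)
    exact hi (by simp [hu, h1, h2])
  have b1 := ric_indicator hδ3 hW hus (T := T) Set.subset_union_right
  have b2 := gram_sub_resolvent_le hσ1 hσm hε hlam u
  have b3 := resolvent_transpose_le hσ1 hσm hε hεσ e'
  rw [← hR] at b2 b3
  have hind : ∀ b : Fin n → ℝ, norm2 (T.indicator b) ≤ norm2 b := fun b =>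
    norm2_mono fun i => by by_cases h : i ∈ T <;> simp [h, sq_nonneg]
  have b4 : norm2 (T.indicator (z - a)) ≤
      (δ3 + σ1 ^ 2 - lam * σ1 ^ 2 / (ε + σ1 ^ 2)) * norm2 u +
        lam * (σ1 / (ε + σ1 ^ 2)) * norm2 e' := by
    rw [hsplit, Set.indicator_add']
    refine (norm2_add _ _).trans ?_
    have c1 := (hind _).trans (norm2_add (Aᵀ *ᵥ (A *ᵥ u) - lam • R *ᵥ (Aᵀ *ᵥ (A *ᵥ u)))
      (lam • R *ᵥ (Aᵀ *ᵥ e')))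
    rw [norm2_smul, abs_of_nonneg hlam0] at c1
    have c2 := mul_le_mul_of_nonneg_left b3 hlam0
    linarith
  have hs0 : 0 ≤ Real.sqrt (1 - δ2 ^ 2) := Real.sqrt_nonneg _
  have b5 := div_le_div_of_nonneg_right
    (htail.trans (mul_le_mul_of_nonneg_left b4 (Real.sqrt_nonneg 2))) hs0
  refine (hproj.trans (add_le_add_left b5 _)).trans (le_of_eq ?_)
  have : Real.sqrt 2 * lam * σ1 / (Real.sqrt (1 - δ2 ^ 2) * (ε + σ1 ^ 2)) =
      Real.sqrt 2 * (lam * (σ1 / (ε + σ1 ^ 2))) / Real.sqrt (1 - δ2 ^ 2) := by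
    rw [div_mul_eq_div_div_swap]; ring
  rw [this]
  ring

/-- Theorem 4.3: NSHTP recovery error bound in noisy settings. -/
theorem stmt_15 {m n : ℕ} (hmn : m ≤ n) (A : Matrix (Fin m) (Fin n) ℝ) (hA : A ≠ 0)
    (σ1 σm : ℝ) (hσ1 : IsMaxSingularValue A σ1) (hσm : IsMinSingularValue A σm)
    (k : ℕ) (hk : 0 < k) (hkn : 3 * k ≤ n)
    (δ1 δ2 δ3 : ℝ) (hδ1 : IsRIC A k δ1) (hδ2 : IsRIC A (2 * k) δ2)
    (hδ3 : IsRIC A (3 * k) δ3) (hδ23 : δ2 ≤ δ3) (hδ3half : δ3 < 1 / 2)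
    (ε lam : ℝ)
    (hε : max (σ1 ^ 2) (((σ1 ^ 2 - σm ^ 2) / (1 / 2 - δ3) - 1) * σ1 ^ 2) < ε)
    (hlam1 : ε + σ1 ^ 2 - (1 / 2 - δ3) * (ε + σ1 ^ 2) / σ1 ^ 2 < lam)
    (hlam2 : lam ≤ ε + σm ^ 2)
    (x : Fin n → ℝ) (e : Fin m → ℝ) (y : Fin m → ℝ) (hy : y = A.mulVec x + e)
    (xS : Fin n → ℝ) (hxS : ∃ S : Set (Fin n), IsHardThresholding k x xS S)
    (e' : Fin m → ℝ) (he' : e' = A.mulVec (x - xS) + e)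
    (xs : ℕ → Fin n → ℝ) (hx0 : (supp (xs 0)).ncard ≤ k)
    (hiter : ∀ p : ℕ, ∃ xbar : Fin n → ℝ,
      (∃ S : Set (Fin n),
        IsHardThresholding k
          (xs p + lam • ((Aᵀ * A + ε • (1 : Matrix (Fin n) (Fin n) ℝ))⁻¹).mulVec
            (Aᵀ.mulVec (y - A.mulVec (xs p))))
          xbar S) ∧
      supp (xs (p + 1)) ⊆ supp xbar ∧
      ∀ z : Fin n → ℝ, supp z ⊆ supp xbar →
        norm2 (y - A.mulVec (xs (p + 1))) ≤ norm2 (y - A.mulVec z)) :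
    Real.sqrt 3 * (δ3 + σ1 ^ 2 - lam * σ1 ^ 2 / (ε + σ1 ^ 2)) /
        Real.sqrt (1 - δ2 ^ 2) < 1 ∧
    ∀ p : ℕ, norm2 (xs p - xS) ≤
      (Real.sqrt 3 * (δ3 + σ1 ^ 2 - lam * σ1 ^ 2 / (ε + σ1 ^ 2)) /
          Real.sqrt (1 - δ2 ^ 2)) ^ p * norm2 (xs 0 - xS) +
      1 / (1 - Real.sqrt 3 * (δ3 + σ1 ^ 2 - lam * σ1 ^ 2 / (ε + σ1 ^ 2)) /
            Real.sqrt (1 - δ2 ^ 2)) *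
        (Real.sqrt 3 * lam * σ1 / (Real.sqrt (1 - δ2 ^ 2) * (ε + σ1 ^ 2)) +
          Real.sqrt (1 + δ1) / (1 - δ2)) * norm2 e' := by
  obtain ⟨S, hS⟩ := hxS
  have hya : y = A *ᵥ xS + e' := by
    rw [hy, he', Matrix.mulVec_sub]; abel
  have ha : supp xS ⊆ S := fun i hi => by
    by_contra h; exact hi (hS.2.2.1 i h)
  -- a coordinate vector is sparse, so the restricted isometry property bounds `σ₁` from below
  have hσ : 1 / 2 - δ3 < σ1 ^ 2 := by
    have hn : 0 < n := by omega
    set v : Fin n → ℝ := Pi.single ⟨0, hn⟩ 1 with hv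
    have hv1 : norm2 v ^ 2 = 1 := by rw [norm2_sq, hv]; simp
    have hvs : (supp v).ncard ≤ 3 * k := by
      have : supp v ⊆ {⟨0, hn⟩} := by
        intro i hi
        by_contra h
        exact hi (by rw [hv, Pi.single_eq_of_ne h])
      have := Set.ncard_le_ncard this (Set.toFinite _)
      rw [Set.ncard_singleton] at this
      omega
    have h1 := (hδ3.2.2 v hvs).1
    have h2 := pow_le_pow_left₀ (norm2_nonneg _) (hσ1.2.1 v) 2
    rw [mul_pow] at h2
    rw [hv1] at h1 h2
    linarith
  have hσpos : 0 < σ1 ^ 2 := by linarith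
  have hεσ : σ1 ^ 2 < ε := (le_max_left _ _).trans_lt hε
  have hε0 : 0 < ε := hσpos.trans hεσ
  have hden : 0 < ε + σ1 ^ 2 := by positivity
  have hlam0 : 0 ≤ lam := by
    refine le_trans ?_ hlam1.le
    rw [sub_nonneg, div_le_iff₀ hσpos]
    nlinarith
  have hsq : σm ^ 2 ≤ σ1 ^ 2 := pow_le_pow_left₀ hσm.1 (minSV_le_maxSV hσ1 hσm) 2
  set β := δ3 + σ1 ^ 2 - lam * σ1 ^ 2 / (ε + σ1 ^ 2) with hβ
  have hβ0 : 0 ≤ β := by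
    have : lam * σ1 ^ 2 / (ε + σ1 ^ 2) ≤ σ1 ^ 2 := by
      rw [div_le_iff₀ hden]; nlinarith
    linarith [hδ3.1]
  have hβ2 : β < 1 / 2 := by
    have : σ1 ^ 2 - (1 / 2 - δ3) < lam * σ1 ^ 2 / (ε + σ1 ^ 2) := by
      rw [lt_div_iff₀ hden]
      have h := mul_lt_mul_of_pos_right hlam1 hσpos
      have e1 : (ε + σ1 ^ 2 - (1 / 2 - δ3) * (ε + σ1 ^ 2) / σ1 ^ 2) * σ1 ^ 2 =
          (σ1 ^ 2 - (1 / 2 - δ3)) * (ε + σ1 ^ 2) := by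
        rw [sub_mul, div_mul_cancel₀ _ hσpos.ne']; ring
      linarith
    linarith
  have hpos : 3 / 4 < 1 - δ2 ^ 2 := by nlinarith [hδ2.1]
  have hs0 : 0 < Real.sqrt (1 - δ2 ^ 2) := Real.sqrt_pos.2 (by linarith)
  have hs : Real.sqrt 3 / 2 < Real.sqrt (1 - δ2 ^ 2) := by
    refine Real.lt_sqrt_of_sq_lt ?_
    rw [div_pow, Real.sq_sqrt (by norm_num)]
    linarith
  have h3 : 0 < Real.sqrt 3 := Real.sqrt_pos.2 (by norm_num)
  set ρ := Real.sqrt 3 * β / Real.sqrt (1 - δ2 ^ 2) with hρ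
  have hρ0 : 0 ≤ ρ := by positivity
  have hρ1 : ρ < 1 := by
    rw [hρ, div_lt_one hs0]
    nlinarith
  refine ⟨hρ1, ?_⟩
  set C := Real.sqrt 3 * lam * σ1 / (Real.sqrt (1 - δ2 ^ 2) * (ε + σ1 ^ 2)) +
    Real.sqrt (1 + δ1) / (1 - δ2) with hC
  have hsparse : ∀ p, (supp (xs p)).ncard ≤ k := by
    intro p
    cases p with
    | zero => exact hx0
    | succ p =>
      obtain ⟨w, ⟨S', hth⟩, hsub, -⟩ := hiter p
      have hwS : supp w ⊆ S' := fun i hi => by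
        by_contra h; exact hi (hth.2.2.1 i h)
      exact (Set.ncard_le_ncard (hsub.trans hwS) (Set.toFinite _)).trans hth.1.le
  have h23 : Real.sqrt 2 ≤ Real.sqrt 3 := Real.sqrt_le_sqrt (by norm_num)
  have hstep : ∀ p, norm2 (xs (p + 1) - xS) ≤ ρ * norm2 (xs p - xS) + C * norm2 e' := by
    intro p
    obtain ⟨w, ⟨S', hth⟩, hsub, hmin⟩ := hiter p
    refine (nshtp_step hσ1 hσm hδ1 hδ2 hδ3 hε0 hεσ hlam0 hlam2 hya hS.1 ha (hsparse p) hth hsub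
      hmin).trans ?_
    have hσ10 := hσ1.1
    have := norm2_nonneg e'
    have := norm2_nonneg (xs p - xS)
    rw [← hβ, hρ, hC]
    gcongr
  intro p
  induction p with
  | zero =>
    have hC0 : 0 ≤ C := by
      have := hδ2.2.1
      have h1 : 0 ≤ 1 - δ2 := by linarith
      have := hσ1.1
      positivity
    have h1 : 0 ≤ 1 - ρ := by linarith
    have := norm2_nonneg e'
    have : 0 ≤ 1 / (1 - ρ) * C * norm2 e' := by positivity
    simpa using this
  | succ p ih =>
    refine (hstep p).trans ?_
    have h := mul_le_mul_of_nonneg_left ih hρ0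
    -- the noise terms add up as `ρ/(1-ρ) + 1 = 1/(1-ρ)`
    have e1 : ρ * (1 / (1 - ρ) * C * norm2 e') + C * norm2 e' = 1 / (1 - ρ) * C * norm2 e' := by
      have : 1 - ρ ≠ 0 := by linarith
      field_simp
      ring
    rw [pow_succ]
    linarith
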